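/- The upper bound is tight: let S, S' be finite sets with |S| = |S'| = n, q = 1 − |S∩S'|/n, and let p ∈ [0,1] with p·n an integer and p + q ≤ 1. Then there exists h: universe → {0,1} with E_{Z∼uniform(S)}[h] = p and E_{Z∼uniform(S')}[h] = p + q. -/

import Mathlib

/-- Tightness of the upper bound: if `|S| = |S'| = n`, `q = 1 − |S∩S'|/n`,
`p·n` is an integer and `p + q ≤ 1`, there is a `{0,1}`-valued `h` with mean `p` under
uniform(S) and mean `p + q` under uniform(S'). -/
theorem upper_bound_tight {α : Type*} [DecidableEq α]
    (S S' : Finset α) (hS : S.Nonempty) (hS' : S'.Nonempty)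
    (n : ℕ) (hSn : S.card = n) (hS'n : S'.card = n)
    (p q : ℝ) (hq : q = 1 - ((S ∩ S').card : ℝ) / (n : ℝ))
    (hp : p ∈ Set.Icc (0 : ℝ) 1) (hint : ∃ k : ℕ, p * (n : ℝ) = (k : ℝ))
    (hpq : p + q ≤ 1) :
    ∃ h : α → ℝ, (∀ z, h z = 0 ∨ h z = 1) ∧
      (∑ z ∈ S, h z) / (n : ℝ) = p ∧
      (∑ z ∈ S', h z) / (n : ℝ) = p + q := by
  obtain ⟨k, hk⟩ := hint
  have hn : (0 : ℝ) < n := by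
    exact_mod_cast hSn ▸ hS.card_pos
  have hqn : q * n = n - (S ∩ S').card := by
    rw [hq]
    field_simp
  have hkle : k ≤ (S ∩ S').card := by
    have : (k : ℝ) ≤ (S ∩ S').card := by
      nlinarith [mul_le_mul_of_nonneg_right hpq hn.le]
    exact_mod_cast this
  obtain ⟨T, hT, hTk⟩ := Finset.exists_subset_card_eq hkle
  have hTS : T ⊆ S := hT.trans Finset.inter_subset_left
  have hTS' : T ⊆ S' := hT.trans Finset.inter_subset_right
  have hSU : S ∩ (T ∪ S' \ S) = T := by
    rw [Finset.inter_union_distrib_left, Finset.inter_sdiff_self, Finset.union_empty,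
      Finset.inter_eq_right.mpr hTS]
  have hS'U : S' ∩ (T ∪ S' \ S) = T ∪ S' \ S :=
    Finset.inter_eq_right.mpr (Finset.union_subset hTS' Finset.sdiff_subset)
  have hdisj : Disjoint T (S' \ S) := Finset.disjoint_sdiff.mono_left hTS
  have hcard : ((S' \ S).card : ℝ) + (S ∩ S').card = n := by
    rw [Finset.inter_comm]
    exact_mod_cast (Finset.card_sdiff_add_card_inter S' S).trans hS'n
  refine ⟨fun z => if z ∈ T ∪ S' \ S then 1 else 0, fun z => ?_, ?_, ?_⟩
  · exact (ite_eq_or_eq _ _ _).symm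
  · rw [Finset.sum_ite_mem, hSU, div_eq_iff hn.ne', hk]
    simp [hTk]
  · rw [Finset.sum_ite_mem, hS'U, div_eq_iff hn.ne', Finset.sum_const, nsmul_one,
      Finset.card_union_of_disjoint hdisj, hTk]
    push_cast
    linarith
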